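/- arXiv:1507.07977 — 4 statements merged into one kernel-verified Lean document; each statement's English description precedes it below -/
import Mathlib

section
/- There exists an absolute constant C such that for all integers h, k, m with 1 ≤ h < k, gcd(h,k) = 1, 0 ≤ m < k, and every real R with 2 ≤ R ≤ k: | Σ_{(β,γ) ∈ Z_k(h,k) \ Z_R(h,k)} sin(2π m γ/k)/|βγ| | ≤ C·(log R)/R. -/
/-!
The bound holds for the sum of the absolute values `1 / (|β| γ)`; no cancellation in the sine is
needed. Put `F(n) = 1 / (n * max n R)` (`tailWeight`). If `max x y ≥ R`, then
`1 / (x y) ≤ F(min x y) ≤ F(x) + F(y)`, and every pair outside `Z_R` has `max |β| γ ≥ R`.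

Since `h` is invertible modulo `k`, on the pairs of `Z_k` with `β` of a fixed sign each of `|β|`
and `γ` determines the other. Hence each of the four resulting sums of `F` (two signs, two
coordinates) is at most `∑_{n ≤ k} F(n)`, which is
`O((∑_{n ≤ R} 1/n) / R + ∑_{n > R} 1/n²) = O(log R / R)`.
-/

open scoped Real Classical

/-- The finite set of pairs
`Z_R(h,k) = {(β,γ) : 1 ≤ |β| < R, 1 ≤ γ < R, βh ≡ γ (mod k)}` (here with `R ≤ k`,
realised as a subset of the pairs with `1 ≤ |β| ≤ k`, `1 ≤ γ ≤ k`). -/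
noncomputable def ZRFinset (h k : ℕ) (R : ℝ) : Finset (ℤ × ℤ) :=
  (Finset.Icc (-(k : ℤ)) (k : ℤ) ×ˢ Finset.Icc 1 ((k : ℤ) - 1)).filter
    (fun p => 1 ≤ |p.1| ∧ (|p.1| : ℝ) < R ∧ (p.2 : ℝ) < R ∧
      p.1 * (h : ℤ) ≡ p.2 [ZMOD (k : ℤ)])

/-- The weight `1 / (n * max n R)`, equal to `1 / (n R)` for `n ≤ R` and to `1 / n²` beyond. -/
noncomputable def tailWeight (R : ℝ) (n : ℕ) : ℝ := 1 / ((n : ℝ) * max (n : ℝ) R)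

lemma tailWeight_nonneg {R : ℝ} (n : ℕ) : 0 ≤ tailWeight R n := by
  unfold tailWeight
  have : (0 : ℝ) ≤ max (n : ℝ) R := le_max_of_le_left (by positivity)
  positivity

lemma inv_mul_le_tailWeight_of_le {R : ℝ} {x y : ℕ} (hx : 1 ≤ x) (hxy : x ≤ y)
    (hy : R ≤ y) : 1 / ((x : ℝ) * y) ≤ tailWeight R x := by
  unfold tailWeight
  have hx' : (0 : ℝ) < x := by exact_mod_cast hx
  have hm : max (x : ℝ) R ≤ y := max_le (by exact_mod_cast hxy) hy
  have hm' : 0 < max (x : ℝ) R := lt_max_of_lt_left hx'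
  gcongr

lemma inv_mul_le_tailWeight_add {R : ℝ} {x y : ℕ} (hx : 1 ≤ x) (hy : 1 ≤ y)
    (h : R ≤ x ∨ R ≤ y) : 1 / ((x : ℝ) * y) ≤ tailWeight R x + tailWeight R y := by
  rcases le_total x y with hxy | hxy
  · have hR : R ≤ y := h.elim (fun h => h.trans (by exact_mod_cast hxy)) id
    linarith [inv_mul_le_tailWeight_of_le hx hxy hR, tailWeight_nonneg (R := R) y]
  · have hR : R ≤ x := h.elim id (fun h => h.trans (by exact_mod_cast hxy))
    have := inv_mul_le_tailWeight_of_le hy hxy hR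
    rw [mul_comm] at this
    linarith [tailWeight_nonneg (R := R) x]

lemma sum_tailWeight_le {R : ℝ} {k : ℕ} (hR : 2 ≤ R) (hk : R ≤ k) :
    ∑ n ∈ Finset.Icc 1 k, tailWeight R n ≤ 6 * Real.log R / R := by
  set N := ⌊R⌋₊ with hN
  have hR0 : (0 : ℝ) < R := by linarith
  have hN2 : 2 ≤ N := Nat.le_floor (by exact_mod_cast hR)
  have hNR : (N : ℝ) ≤ R := Nat.floor_le hR0.le
  have hRN : R < N + 1 := Nat.lt_floor_add_one R
  have hN2' : (2 : ℝ) ≤ N := by exact_mod_cast hN2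
  have hNk : N ≤ k := by exact_mod_cast hNR.trans hk
  have hsplit : Finset.Icc 1 k = Finset.Icc 1 N ∪ Finset.Ioc N k := by
    ext n; simp only [Finset.mem_Icc, Finset.mem_union, Finset.mem_Ioc]; omega
  have hdisj : Disjoint (Finset.Icc 1 N) (Finset.Ioc N k) := by
    rw [Finset.disjoint_left]; intro n; simp only [Finset.mem_Icc, Finset.mem_Ioc]; omega
  rw [hsplit, Finset.sum_union hdisj]
  have h1 : ∑ n ∈ Finset.Icc 1 N, tailWeight R n ≤ (1 + Real.log R) / R := by
    have hH : ((harmonic N : ℚ) : ℝ) ≤ 1 + Real.log R :=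
      harmonic_floor_le_one_add_log R (by linarith)
    calc ∑ n ∈ Finset.Icc 1 N, tailWeight R n
        ≤ ∑ n ∈ Finset.Icc 1 N, ((n : ℝ)⁻¹) / R := by
          refine Finset.sum_le_sum fun n hn => ?_
          have : (0 : ℝ) < n := by exact_mod_cast (Finset.mem_Icc.1 hn).1
          unfold tailWeight
          rw [inv_eq_one_div, div_div]
          gcongr
          exact le_max_right _ _
      _ = ((harmonic N : ℚ) : ℝ) / R := by
          rw [← Finset.sum_div, harmonic_eq_sum_Icc]; push_cast; rfl
      _ ≤ _ := by gcongr
  have h2 : ∑ n ∈ Finset.Ioc N k, tailWeight R n ≤ 2 / R := by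
    calc ∑ n ∈ Finset.Ioc N k, tailWeight R n
        ≤ ∑ n ∈ Finset.Ioc N k, ((n : ℝ) ^ 2)⁻¹ := by
          refine Finset.sum_le_sum fun n hn => ?_
          have : (0 : ℝ) < n := by
            exact_mod_cast (Nat.zero_le N).trans_lt (Finset.mem_Ioc.1 hn).1
          unfold tailWeight
          rw [inv_eq_one_div, sq]
          gcongr
          exact le_max_left _ _
      _ ≤ (N : ℝ)⁻¹ - (k : ℝ)⁻¹ := sum_Ioc_inv_sq_le_sub (by omega) hNk
      _ ≤ (N : ℝ)⁻¹ := by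
          have : (0 : ℝ) ≤ (k : ℝ)⁻¹ := by positivity
          linarith
      _ ≤ 2 / R := by
          rw [inv_eq_one_div, div_le_div_iff₀ (by linarith) hR0]; linarith
  have hlog : 0.69 < Real.log R :=
    lt_of_lt_of_le (by linarith [Real.log_two_gt_d9]) (Real.log_le_log (by norm_num) hR)
  calc _ ≤ (1 + Real.log R) / R + 2 / R := add_le_add h1 h2
    _ = (3 + Real.log R) / R := by ring
    _ ≤ _ := by gcongr; linarith

lemma sum_tailWeight_comp_le {α : Type*} {R : ℝ} {k : ℕ} (T : Finset α) (f : α → ℕ)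
    (hf : Set.InjOn f T) (hm : ∀ p ∈ T, 1 ≤ f p ∧ f p ≤ k) :
    ∑ p ∈ T, tailWeight R (f p) ≤ ∑ n ∈ Finset.Icc 1 k, tailWeight R n := by
  rw [← Finset.sum_image (f := tailWeight R) hf]
  refine Finset.sum_le_sum_of_subset_of_nonneg ?_ fun n _ _ => tailWeight_nonneg n
  intro n hn
  obtain ⟨p, hp, rfl⟩ := Finset.mem_image.1 hn
  exact Finset.mem_Icc.2 (hm p hp)

lemma Int.eq_of_modEq_of_abs_sub_lt {a b k : ℤ} (h : a ≡ b [ZMOD k]) (hlt : |b - a| < k) :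
    a = b := by
  have := Int.eq_zero_of_abs_lt_dvd h.dvd hlt
  omega

/-- The estimate for a set of pairs of `Z_k` outside `Z_R` on which `β` has constant sign; the
sign condition enters as `hs`: any two values of `β` differ by less than `k`, and `|β|` determines `β`. -/
lemma sum_inv_le_of_sign {h k : ℕ} {R : ℝ} (hg : Nat.gcd h k = 1) (hR : 2 ≤ R) (hk : R ≤ k)
    (T : Finset (ℤ × ℤ))
    (hT : ∀ p ∈ T, 1 ≤ p.1.natAbs ∧ p.1.natAbs < k ∧ 1 ≤ p.2 ∧ p.2 < k ∧
      p.1 * (h : ℤ) ≡ p.2 [ZMOD (k : ℤ)] ∧ (R ≤ p.1.natAbs ∨ R ≤ p.2.natAbs))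
    (hs : ∀ p ∈ T, ∀ q ∈ T, |q.1 - p.1| < k ∧ (p.1.natAbs = q.1.natAbs → p.1 = q.1)) :
    ∑ p ∈ T, 1 / ((p.1.natAbs : ℝ) * p.2.natAbs) ≤ 12 * Real.log R / R := by
  have hinj1 : Set.InjOn (fun p : ℤ × ℤ => p.1.natAbs) T := by
    intro p hp q hq hpq
    have h1 := (hs p hp q hq).2 hpq
    obtain ⟨-, -, a1, a2, a3, -⟩ := hT p hp
    obtain ⟨-, -, b1, b2, b3, -⟩ := hT q hq
    rw [← h1] at b3
    refine Prod.ext h1 (Int.eq_of_modEq_of_abs_sub_lt (a3.symm.trans b3) ?_)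
    rw [abs_lt]; constructor <;> omega
  have hinj2 : Set.InjOn (fun p : ℤ × ℤ => p.2.natAbs) T := by
    intro p hp q hq hpq
    obtain ⟨-, -, a1, a2, a3, -⟩ := hT p hp
    obtain ⟨-, -, b1, b2, b3, -⟩ := hT q hq
    have h2 : p.2 = q.2 := by simp only at hpq; omega
    rw [← h2] at b3
    have hc : p.1 * (h : ℤ) ≡ q.1 * h [ZMOD (k : ℤ)] := a3.trans b3.symm
    have hc' := Int.ModEq.cancel_right_div_gcd (by linarith : (0 : ℤ) < k) hc
    have hgz : Int.gcd (k : ℤ) (h : ℤ) = 1 := by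
      rw [Int.gcd_natCast_natCast, Nat.gcd_comm]; exact hg
    rw [hgz] at hc'
    simp only [Nat.cast_one, Int.ediv_one] at hc'
    exact Prod.ext (Int.eq_of_modEq_of_abs_sub_lt hc' (hs p hp q hq).1) h2
  calc ∑ p ∈ T, 1 / ((p.1.natAbs : ℝ) * p.2.natAbs)
      ≤ ∑ p ∈ T, (tailWeight R p.1.natAbs + tailWeight R p.2.natAbs) := by
        refine Finset.sum_le_sum fun p hp => ?_
        obtain ⟨a0, -, a1, -, -, a4⟩ := hT p hp
        exact inv_mul_le_tailWeight_add a0 (by omega) a4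
    _ = ∑ p ∈ T, tailWeight R p.1.natAbs + ∑ p ∈ T, tailWeight R p.2.natAbs :=
        Finset.sum_add_distrib
    _ ≤ 6 * Real.log R / R + 6 * Real.log R / R := by
        refine add_le_add
          ((sum_tailWeight_comp_le T _ hinj1 fun p hp => ?_).trans (sum_tailWeight_le hR hk))
          ((sum_tailWeight_comp_le T _ hinj2 fun p hp => ?_).trans (sum_tailWeight_le hR hk))
        · obtain ⟨a0, a1, -⟩ := hT p hp
          exact ⟨a0, a1.le⟩
        · obtain ⟨-, -, a1, a2, -⟩ := hT p hp
          constructor <;> omega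
    _ = _ := by ring

theorem stmt12 : ∃ C : ℝ, 0 < C ∧ ∀ h k m : ℕ, ∀ R : ℝ,
    1 ≤ h → h < k → Nat.gcd h k = 1 → m < k → 2 ≤ R → R ≤ (k : ℝ) →
    |∑ p ∈ ZRFinset h k (k : ℝ) \ ZRFinset h k R,
        Real.sin (2 * π * m * (p.2 : ℝ) / k) / (|(p.1 : ℝ) * (p.2 : ℝ)|)|
      ≤ C * Real.log R / R := by
  refine ⟨24, by norm_num, fun h k m R _ _ hg _ hR hRk => ?_⟩
  set T := ZRFinset h k (k : ℝ) \ ZRFinset h k R with hTdef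
  have hT : ∀ p ∈ T, 1 ≤ p.1.natAbs ∧ p.1.natAbs < k ∧ 1 ≤ p.2 ∧ p.2 < k ∧
      p.1 * (h : ℤ) ≡ p.2 [ZMOD (k : ℤ)] ∧ (R ≤ p.1.natAbs ∨ R ≤ p.2.natAbs) := by
    intro p hp
    simp only [hTdef, ZRFinset, Finset.mem_sdiff, Finset.mem_filter, Finset.mem_product,
      Finset.mem_Icc] at hp
    obtain ⟨⟨⟨hb, hc1, hc2⟩, h1, h2, h3, h4⟩, hn⟩ := hp
    have h2' : |p.1| < (k : ℤ) := by exact_mod_cast h2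
    have h1' := h1
    rw [Int.abs_eq_natAbs] at h1' h2'
    refine ⟨by omega, by omega, hc1, by omega, h4, ?_⟩
    by_contra! hcon
    refine hn ⟨⟨hb, hc1, hc2⟩, h1, ?_, ?_, h4⟩
    · have := hcon.1
      rwa [Nat.cast_natAbs, Int.cast_abs] at this
    · have := hcon.2
      rw [Nat.cast_natAbs, Int.cast_abs] at this
      exact (le_abs_self _).trans_lt this
  calc |∑ p ∈ T, Real.sin (2 * π * m * (p.2 : ℝ) / k) / (|(p.1 : ℝ) * (p.2 : ℝ)|)|
      ≤ ∑ p ∈ T, 1 / ((p.1.natAbs : ℝ) * p.2.natAbs) := by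
        refine (Finset.abs_sum_le_sum_abs _ _).trans (Finset.sum_le_sum fun p _ => ?_)
        rw [abs_div, abs_abs, abs_mul, Nat.cast_natAbs, Nat.cast_natAbs, Int.cast_abs,
          Int.cast_abs]
        gcongr
        exact Real.abs_sin_le_one _
    _ = ∑ p ∈ T.filter (fun p => 0 < p.1), 1 / ((p.1.natAbs : ℝ) * p.2.natAbs)
        + ∑ p ∈ T.filter (fun p => ¬ 0 < p.1), 1 / ((p.1.natAbs : ℝ) * p.2.natAbs) :=
        (Finset.sum_filter_add_sum_filter_not _ _ _).symm
    _ ≤ 12 * Real.log R / R + 12 * Real.log R / R := by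
        refine add_le_add
          (sum_inv_le_of_sign hg hR hRk _ (fun p hp => hT p (Finset.mem_filter.1 hp).1) ?_)
          (sum_inv_le_of_sign hg hR hRk _ (fun p hp => hT p (Finset.mem_filter.1 hp).1) ?_)
        all_goals
          intro p hp q hq
          obtain ⟨hp, hp'⟩ := Finset.mem_filter.1 hp
          obtain ⟨hq, hq'⟩ := Finset.mem_filter.1 hq
          obtain ⟨a0, a1, -⟩ := hT p hp
          obtain ⟨b0, b1, -⟩ := hT q hq
          rw [abs_lt]
          refine ⟨⟨?_, ?_⟩, ?_⟩ <;> omega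
    _ = _ := by ring
end

section
/- Let h, k be integers with 1 ≤ h < k and gcd(h,k) = 1, and let R > 0 be real with k ≥ 2R². Suppose Z_R(h,k) is non-empty and let (β₁,γ₁) ∈ Z_R(h,k) satisfy |β₁γ₁| ≤ |βγ| for all (β,γ) ∈ Z_R(h,k). Then for every (β,γ) ∈ Z_R(h,k) there exists a positive integer λ such that β = λβ₁ and γ = λγ₁. -/
/-!
Any two elements `(β, γ)`, `(β₁, γ₁)` of `Z_R(h,k)` are proportional: both `βγ₁` and `β₁γ` are
congruent to `ββ₁h` modulo `k`, while `|βγ₁ - β₁γ| < 2R² ≤ k`, so `βγ₁ = β₁γ`.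
Now divide: `γ = qγ₁ + r` with `0 ≤ r < γ₁`. If `r > 0`, then `(β - qβ₁, r)` satisfies the same
congruence and is `r/γ₁ < 1` times `(β₁, γ₁)`, so it lies in `Z_R(h,k)` and has a smaller product,
against minimality. Hence `r = 0` and `(β, γ) = q(β₁, γ₁)`.
-/

/-- Membership in `Z_R(h,k) = {(β,γ) : 1 ≤ |β| < R, 1 ≤ γ < R, βh ≡ γ (mod k)}`. -/
def ZR (h k : ℕ) (R : ℝ) (p : ℤ × ℤ) : Prop :=
  1 ≤ |p.1| ∧ (|p.1| : ℝ) < R ∧ 1 ≤ p.2 ∧ (p.2 : ℝ) < R ∧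
    p.1 * (h : ℤ) ≡ p.2 [ZMOD (k : ℤ)]

/-- Two elements of `Z_R(h,k)` are proportional as soon as `2R² ≤ k`. -/
theorem ZR_cross_eq {h k : ℕ} {R : ℝ} (hkR : 2 * R ^ 2 ≤ (k : ℝ))
    {β γ β₁ γ₁ : ℤ} (hp : ZR h k R (β, γ)) (h₁ : ZR h k R (β₁, γ₁)) :
    β * γ₁ = β₁ * γ := by
  obtain ⟨-, hb, hc1, hc, hm⟩ := hp
  obtain ⟨-, hb1, hc11, hc1', hm1⟩ := h₁
  simp only at *
  have hdvd : (k : ℤ) ∣ β * γ₁ - β₁ * γ := by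
    have e1 := (hm.mul_left β₁).dvd
    have e2 := (hm1.mul_left β).dvd
    have e3 : β * γ₁ - β₁ * γ = (β * γ₁ - β * (β₁ * h)) - (β₁ * γ - β₁ * (β * h)) := by ring
    rw [e3]
    exact dvd_sub e2 e1
  have hlt : |β * γ₁ - β₁ * γ| < (k : ℤ) := by
    have hγ : (0 : ℝ) < γ := by exact_mod_cast hc1
    have hγ₁ : (0 : ℝ) < γ₁ := by exact_mod_cast hc11
    have a1 : |(β : ℝ) * γ₁| < R ^ 2 := by
      rw [abs_mul, abs_of_pos hγ₁, sq]
      exact mul_lt_mul'' hb hc1' (abs_nonneg _) hγ₁.le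
    have a2 : |(β₁ : ℝ) * γ| < R ^ 2 := by
      rw [abs_mul, abs_of_pos hγ, sq]
      exact mul_lt_mul'' hb1 hc (abs_nonneg _) hγ.le
    have a3 := abs_sub (β * γ₁ : ℝ) (β₁ * γ)
    have : |(β * γ₁ - β₁ * γ : ℝ)| < k := by linarith
    exact_mod_cast this
  exact sub_eq_zero.mp (Int.eq_zero_of_abs_lt_dvd hdvd hlt)

theorem stmt13 (h k : ℕ) (hh : 1 ≤ h) (hhk : h < k) (hgcd : Nat.gcd h k = 1)
    (R : ℝ) (hR : 0 < R) (hkR : 2 * R ^ 2 ≤ (k : ℝ))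
    (β₁ γ₁ : ℤ) (h₁ : ZR h k R (β₁, γ₁))
    (hmin : ∀ p : ℤ × ℤ, ZR h k R p → |β₁ * γ₁| ≤ |p.1 * p.2|) :
    ∀ p : ℤ × ℤ, ZR h k R p →
      ∃ lam : ℤ, 0 < lam ∧ p.1 = lam * β₁ ∧ p.2 = lam * γ₁ := by
  rintro ⟨β, γ⟩ hp
  have hcross := ZR_cross_eq hkR hp h₁
  obtain ⟨-, -, hc1, -, hm⟩ := hp
  obtain ⟨hb1, hbR, hg1, hgR, hm1⟩ := h₁
  simp only at *
  have hg0 : 0 < γ₁ := hg1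
  have hdiv := Int.emod_add_mul_ediv γ γ₁
  have hr0 := Int.emod_nonneg γ hg0.ne'
  have hrlt := Int.emod_lt_of_pos γ hg0
  set q := γ / γ₁
  set r := γ % γ₁
  have hcr : (β - q * β₁) * γ₁ = β₁ * r := by linear_combination hcross - β₁ * hdiv
  rcases hr0.eq_or_lt with hr | hr
  · rw [← hr, mul_zero] at hcr
    have hβ := (mul_eq_zero.mp hcr).resolve_right hg0.ne'
    refine ⟨q, ?_, by linarith, by linarith⟩
    by_contra! hq
    nlinarith
  · exfalso
    have habs : |β - q * β₁| * γ₁ = |β₁| * r := by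
      have := congrArg abs hcr
      rwa [abs_mul, abs_mul, abs_of_pos hg0, abs_of_pos hr] at this
    have hpos : 0 < |β - q * β₁| := by
      by_contra! hle
      nlinarith [mul_pos (show 0 < |β₁| from hb1) hr]
    have hlt : |β - q * β₁| < |β₁| := by
      by_contra! hle
      nlinarith
    have hltR : (|β - q * β₁| : ℝ) < |(β₁ : ℝ)| := by exact_mod_cast hlt
    have hrR : (r : ℝ) < γ₁ := by exact_mod_cast hrlt
    have hZ : ZR h k R (β - q * β₁, r) := by
      refine ⟨hpos, ?_, hr, hrR.trans hgR, ?_⟩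
      · push_cast
        exact hltR.trans hbR
      · have := hm.sub (hm1.mul_left q)
        convert this using 1
        · ring
        · linarith
    have := hmin _ hZ
    simp only [abs_mul, abs_of_pos hg0, abs_of_pos hr] at this
    exact absurd this (not_le.mpr (mul_lt_mul'' hlt hrlt (abs_nonneg _) hr.le))
end

section
/- Let k be an odd integer with k ≥ 3, let a be an integer with 1 ≤ a ≤ (k-1)/2, and set m := a + (k-1)/2. Then ∏^{-1}(2/k)_m = ((-1)^a/√k) · ∏^{-1}(1/k)_{2a} / ∏^{-1}(2/k)_a; equivalently, 1/∏_{j=1}^m 2 sin(2πj/k) = ((-1)^a/√k) · ( ∏_{j=1}^{a} 2 sin(2πj/k) ) / ( ∏_{j=1}^{2a} 2 sin(πj/k) ). -/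
open scoped Real

/-!
Write `k = 2n + 1`. After clearing denominators the claim is
`∏_{j ≤ a+n} 2 sin(2πj/k) · ∏_{j ≤ a} 2 sin(2πj/k) = (-1)^a √k ∏_{j ≤ 2a} 2 sin(πj/k)`,
which holds by induction on `a`: since `2(a+1+n) = (2a+1) + k`, the new factor
`2 sin(2π(a+1+n)/k)` equals `-2 sin(π(2a+1)/k)`. The base case is
`∏_{j ≤ n} 2 sin(2πj/k) = √k` (`prod_half`). All factors there are positive, and its square is,
by the symmetry `j ↦ k - j`, the modulus of `∏_{0 < j < k} (1 - ζ^j) = k` for the primitive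
`k`-th root of unity `ζ = exp(4πi/k)`.
-/

/-- The modulus of `∏_{0 < j < k} (1 - ζ^j) = k` for `ζ = exp(4πi/k)`. -/
lemma prod_abs_full (n : ℕ) :
    ∏ j ∈ Finset.range (2 * n),
      |2 * Real.sin (2 * π * ((j + 1 : ℕ) : ℝ) / ((2 * n + 1 : ℕ) : ℝ))| =
        ((2 * n + 1 : ℕ) : ℝ) := by
  have hμ : IsPrimitiveRoot
      (Complex.exp (2 * π * Complex.I * (((2 : ℕ) : ℂ) / ((2 * n + 1 : ℕ) : ℂ)))) (2 * n + 1) :=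
    Complex.isPrimitiveRoot_exp_of_coprime 2 (2 * n + 1) (by omega) (by simp)
  have h := congrArg norm hμ.prod_one_sub_pow_eq_order
  rw [norm_prod] at h
  have hk : ‖((2 * n : ℕ) : ℂ) + 1‖ = ((2 * n + 1 : ℕ) : ℝ) := by
    rw [← Nat.cast_succ, Complex.norm_natCast]
  rw [hk] at h
  refine (Finset.prod_congr rfl fun j _ => ?_).trans h
  rw [norm_sub_rev, ← Complex.exp_nat_mul]
  have := Complex.norm_exp_I_mul_ofReal_sub_one
    (2 * (2 * π * ((j + 1 : ℕ) : ℝ) / ((2 * n + 1 : ℕ) : ℝ)))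
  rw [mul_div_cancel_left₀ _ (two_ne_zero), Real.norm_eq_abs] at this
  rw [← this]
  congr 3
  push_cast
  ring

lemma sin_two_pi_pos {n j : ℕ} (h1 : 1 ≤ j) (h2 : j ≤ n) :
    0 < 2 * Real.sin (2 * π * (j : ℝ) / ((2 * n + 1 : ℕ) : ℝ)) := by
  have h1' : (1 : ℝ) ≤ j := by exact_mod_cast h1
  have h2' : (j : ℝ) ≤ n := by exact_mod_cast h2
  refine mul_pos two_pos (Real.sin_pos_of_pos_of_lt_pi (by positivity) ?_)
  rw [div_lt_iff₀ (by positivity)]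
  push_cast
  nlinarith [Real.pi_pos]

lemma prod_half (n : ℕ) :
    ∏ j ∈ Finset.range n,
      2 * Real.sin (2 * π * ((j + 1 : ℕ) : ℝ) / ((2 * n + 1 : ℕ) : ℝ)) =
        Real.sqrt ((2 * n + 1 : ℕ) : ℝ) := by
  have hfull := prod_abs_full n
  have hpos : ∀ j ∈ Finset.range n,
      0 < 2 * Real.sin (2 * π * ((j + 1 : ℕ) : ℝ) / ((2 * n + 1 : ℕ) : ℝ)) := fun j hj =>
    sin_two_pi_pos (by omega) (by have := Finset.mem_range.1 hj; omega)
  rw [eq_comm, Real.sqrt_eq_iff_mul_self_eq (by positivity) (Finset.prod_pos hpos).le]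
  refine Eq.trans hfull.symm ?_
  have hsplit := Finset.prod_range_add
    (fun j : ℕ => |2 * Real.sin (2 * π * ((j + 1 : ℕ) : ℝ) / ((2 * n + 1 : ℕ) : ℝ))|) n n
  rw [← two_mul n] at hsplit
  rw [hsplit]
  congr 1
  · exact Finset.prod_congr rfl fun j hj => abs_of_pos (hpos j hj)
  · rw [← Finset.prod_range_reflect]
    refine Finset.prod_congr rfl fun j hj => ?_
    have hj' := Finset.mem_range.1 hj
    have harg : 2 * π * ((n + (n - 1 - j) + 1 : ℕ) : ℝ) / ((2 * n + 1 : ℕ) : ℝ) =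
        2 * π - 2 * π * ((j + 1 : ℕ) : ℝ) / ((2 * n + 1 : ℕ) : ℝ) := by
      have : n + (n - 1 - j) + 1 = 2 * n - j := by omega
      rw [this, Nat.cast_sub (by omega)]
      field_simp
      push_cast
      ring
    rw [harg, Real.sin_two_pi_sub, mul_neg, abs_neg, abs_of_pos (hpos j hj)]

/-- The identity with denominators cleared; valid for every `a`. -/
lemma prod_cleared (n a : ℕ) :
    (∏ j ∈ Finset.range (a + n),
        2 * Real.sin (2 * π * ((j + 1 : ℕ) : ℝ) / ((2 * n + 1 : ℕ) : ℝ))) *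
      (∏ j ∈ Finset.range a,
        2 * Real.sin (2 * π * ((j + 1 : ℕ) : ℝ) / ((2 * n + 1 : ℕ) : ℝ))) =
    (-1) ^ a * Real.sqrt ((2 * n + 1 : ℕ) : ℝ) *
      ∏ j ∈ Finset.range (2 * a),
        2 * Real.sin (π * ((j + 1 : ℕ) : ℝ) / ((2 * n + 1 : ℕ) : ℝ)) := by
  induction a with
  | zero => simpa using prod_half n
  | succ a ih =>
    have e1 : a + 1 + n = (a + n) + 1 := by ring
    have e2 : 2 * (a + 1) = 2 * a + 1 + 1 := by ring
    rw [e1, e2]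
    simp only [Finset.prod_range_succ]
    have h1 : 2 * π * ((a + n + 1 : ℕ) : ℝ) / ((2 * n + 1 : ℕ) : ℝ) =
        π * ((2 * a + 1 : ℕ) : ℝ) / ((2 * n + 1 : ℕ) : ℝ) + π := by
      field_simp
      push_cast
      ring
    have h2 : 2 * π * ((a + 1 : ℕ) : ℝ) / ((2 * n + 1 : ℕ) : ℝ) =
        π * ((2 * a + 1 + 1 : ℕ) : ℝ) / ((2 * n + 1 : ℕ) : ℝ) := by
      push_cast
      ring
    rw [h1, h2, Real.sin_add_pi, pow_succ]
    linear_combination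
      (-(2 * Real.sin (π * ((2 * a + 1 : ℕ) : ℝ) / ((2 * n + 1 : ℕ) : ℝ))) *
        (2 * Real.sin (π * ((2 * a + 1 + 1 : ℕ) : ℝ) / ((2 * n + 1 : ℕ) : ℝ)))) * ih

lemma prod_Icc_one_eq_range (f : ℕ → ℝ) (m : ℕ) :
    ∏ j ∈ Finset.Icc 1 m, f j = ∏ j ∈ Finset.range m, f (j + 1) := by
  induction m with
  | zero => simp
  | succ m ih => rw [Finset.prod_Icc_succ_top (by omega), ih, Finset.prod_range_succ]

theorem stmt17 (k : ℕ) (hodd : Odd k) (hk3 : 3 ≤ k)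
    (a : ℕ) (ha1 : 1 ≤ a) (ha2 : a ≤ (k - 1) / 2) :
    (∏ j ∈ Finset.Icc 1 (a + (k - 1) / 2), 2 * Real.sin (2 * π * j / k))⁻¹ =
      (-1) ^ a / Real.sqrt k *
        ((∏ j ∈ Finset.Icc 1 a, 2 * Real.sin (2 * π * j / k)) /
          ∏ j ∈ Finset.Icc 1 (2 * a), 2 * Real.sin (π * j / k)) := by
  obtain ⟨n, rfl⟩ := hodd
  have hn : (2 * n + 1 - 1) / 2 = n := by omega
  rw [hn] at ha2 ⊢
  have h := prod_cleared n a
  rw [← prod_Icc_one_eq_range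
      (fun j : ℕ => 2 * Real.sin (2 * π * (j : ℝ) / ((2 * n + 1 : ℕ) : ℝ))),
    ← prod_Icc_one_eq_range
      (fun j : ℕ => 2 * Real.sin (2 * π * (j : ℝ) / ((2 * n + 1 : ℕ) : ℝ))),
    ← prod_Icc_one_eq_range
      (fun j : ℕ => 2 * Real.sin (π * (j : ℝ) / ((2 * n + 1 : ℕ) : ℝ)))] at h
  have hR : 0 < ∏ j ∈ Finset.Icc 1 (2 * a),
      2 * Real.sin (π * (j : ℝ) / ((2 * n + 1 : ℕ) : ℝ)) := by
    refine Finset.prod_pos fun j hj => ?_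
    obtain ⟨hj1, hj2⟩ := Finset.mem_Icc.1 hj
    have hj1' : (1 : ℝ) ≤ j := by exact_mod_cast hj1
    have hj2' : (j : ℝ) < ((2 * n + 1 : ℕ) : ℝ) := by
      exact_mod_cast (by omega : j < 2 * n + 1)
    refine mul_pos two_pos (Real.sin_pos_of_pos_of_lt_pi (by positivity) ?_)
    rw [div_lt_iff₀ (by positivity)]
    exact mul_lt_mul_of_pos_left hj2' Real.pi_pos
  have hS : 0 < Real.sqrt ((2 * n + 1 : ℕ) : ℝ) := Real.sqrt_pos.2 (by positivity)
  have hsign : ((-1 : ℝ) ^ a) * (-1) ^ a = 1 := by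
    rw [← mul_pow]; simp
  generalize (∏ j ∈ Finset.Icc 1 (a + n),
    2 * Real.sin (2 * π * (j : ℝ) / ((2 * n + 1 : ℕ) : ℝ))) = P at *
  generalize (∏ j ∈ Finset.Icc 1 a,
    2 * Real.sin (2 * π * (j : ℝ) / ((2 * n + 1 : ℕ) : ℝ))) = Q at *
  generalize (∏ j ∈ Finset.Icc 1 (2 * a),
    2 * Real.sin (π * (j : ℝ) / ((2 * n + 1 : ℕ) : ℝ))) = R at *
  generalize Real.sqrt ((2 * n + 1 : ℕ) : ℝ) = S at *
  generalize (-1 : ℝ) ^ a = s at *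
  refine inv_eq_of_mul_eq_one_right ?_
  field_simp
  linear_combination s * h + S * R * hsign
end

section
/- Let k be an odd positive integer and let m be an even integer with 0 ≤ m < k. Then ∏^{-1}((k-1)/(2k))_m = ( ∏^{-1}(1/k)_m / ∏^{-1}(1/(2k))_m ) · ( (∏^{-1}(1/k)_{m/2})² / ∏^{-1}(2/k)_{m/2} ); equivalently, 1/∏_{j=1}^m 2 sin(πj(k-1)/(2k)) = ( ∏_{j=1}^m 2 sin(πj/(2k)) / ∏_{j=1}^m 2 sin(πj/k) ) · ( ∏_{j=1}^{m/2} 2 sin(2πj/k) / (∏_{j=1}^{m/2} 2 sin(πj/k))² ). -/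
open scoped Real

/-!
Write `m = 2n`. Clearing denominators, the claim is an identity between products which has no
division by sines (`sine_product_identity`) and holds for every `n`; it is proved by induction,
two factors at a time. With `x = π(2n+1)/(2k)` and `y = π(n+1)/k`, the two new factors on the left
are `2 sin(π(2n+1)/2 - x) = ± 2 cos x` and `2 sin(π(n+1) - y) = ± 2 sin y`, with the same sign
`(-1)^n` (`pair_factor`), so the signs cancel, and what remains is `sin 2x = 2 sin x cos x`.
For `m < k` the sines `sin(πj/k)`, `1 ≤ j ≤ m`, are positive, so the identity can be divided
through; its nonzero right-hand side also shows that the product being inverted is nonzero.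
-/

lemma pair_factor (n : ℕ) (x y : ℝ) :
    Real.sin (n * π + π / 2 - x) * Real.sin (n * π + π - y) = Real.cos x * Real.sin y := by
  have h1 : Real.sin (n * π + π / 2 - x) = (-1) ^ n * Real.cos x := by
    rw [show n * π + π / 2 - x = (π / 2 - x) + n * π by ring, Real.sin_add_nat_mul_pi,
      Real.sin_pi_div_two_sub]
  have h2 : Real.sin (n * π + π - y) = (-1) ^ n * Real.sin y := by
    rw [show n * π + π - y = (π - y) + n * π by ring, Real.sin_add_nat_mul_pi, Real.sin_pi_sub]
  have h3 : ((-1 : ℝ) ^ n) * (-1) ^ n = 1 := by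
    rw [← mul_pow]; simp
  rw [h1, h2]
  linear_combination Real.cos x * Real.sin y * h3

lemma sine_product_identity (k : ℕ) (hk : (k : ℝ) ≠ 0) (n : ℕ) :
    (∏ j ∈ Finset.Icc 1 (2 * n), 2 * Real.sin (π * j * ((k : ℝ) - 1) / (2 * k))) *
      (∏ j ∈ Finset.Icc 1 (2 * n), 2 * Real.sin (π * j / (2 * k))) *
      (∏ j ∈ Finset.Icc 1 n, 2 * Real.sin (2 * π * j / k)) =
    (∏ j ∈ Finset.Icc 1 (2 * n), 2 * Real.sin (π * j / k)) *
      (∏ j ∈ Finset.Icc 1 n, 2 * Real.sin (π * j / k)) ^ 2 := by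
  induction n with
  | zero => simp
  | succ n ih =>
    rw [show 2 * (n + 1) = 2 * n + 1 + 1 by ring]
    simp only [Finset.prod_Icc_succ_top (Nat.le_add_left 1 _)]
    obtain ⟨x, hx⟩ : ∃ x : ℝ, x = π * (2 * n + 1) / (2 * k) := ⟨_, rfl⟩
    obtain ⟨y, hy⟩ : ∃ y : ℝ, y = π * (n + 1) / k := ⟨_, rfl⟩
    have a1 : π * ((2 * n + 1 : ℕ) : ℝ) * ((k : ℝ) - 1) / (2 * k) = n * π + π / 2 - x := by
      rw [hx]; push_cast; field_simp
    have a2 : π * ((2 * n + 1 + 1 : ℕ) : ℝ) * ((k : ℝ) - 1) / (2 * k) = n * π + π - y := by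
      rw [hy]; push_cast; field_simp; ring
    have b1 : π * ((2 * n + 1 : ℕ) : ℝ) / (2 * k) = x := by
      rw [hx]; push_cast; rfl
    have b2 : π * ((2 * n + 1 + 1 : ℕ) : ℝ) / (2 * k) = y := by
      rw [hy]; push_cast; field_simp; ring
    have c1 : 2 * π * ((n + 1 : ℕ) : ℝ) / k = 2 * y := by
      rw [hy]; push_cast; field_simp
    have d1 : π * ((2 * n + 1 : ℕ) : ℝ) / k = 2 * x := by
      rw [hx]; push_cast; field_simp
    have d2 : π * ((2 * n + 1 + 1 : ℕ) : ℝ) / k = 2 * y := by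
      rw [hy]; push_cast; field_simp; ring
    have e1 : π * ((n + 1 : ℕ) : ℝ) / k = y := by
      rw [hy]; push_cast; rfl
    rw [a1, a2, b1, b2, c1, d1, d2, e1]
    have hp := pair_factor n x y
    have hs := Real.sin_two_mul x
    generalize (∏ j ∈ Finset.Icc 1 (2 * n),
      2 * Real.sin (π * j * ((k : ℝ) - 1) / (2 * k))) = A at *
    generalize (∏ j ∈ Finset.Icc 1 (2 * n), 2 * Real.sin (π * j / (2 * k))) = B at *
    generalize (∏ j ∈ Finset.Icc 1 n, 2 * Real.sin (2 * π * j / k)) = C at *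
    generalize (∏ j ∈ Finset.Icc 1 (2 * n), 2 * Real.sin (π * j / k)) = D at *
    generalize (∏ j ∈ Finset.Icc 1 n, 2 * Real.sin (π * j / k)) = E at *
    rw [hs]
    linear_combination
      (32 * A * B * C * Real.sin x * Real.sin y * Real.sin (2 * y)) * hp +
      (32 * Real.cos x * Real.sin x * Real.sin y ^ 2 * Real.sin (2 * y)) * ih

lemma sine_product_ne_zero (k n : ℕ) (hn : n < k) :
    (∏ j ∈ Finset.Icc 1 n, 2 * Real.sin (π * j / k)) ≠ 0 := by
  refine Finset.prod_ne_zero_iff.mpr fun j hj => ?_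
  obtain ⟨h1, h2⟩ := Finset.mem_Icc.mp hj
  have hj0 : (0 : ℝ) < j := by exact_mod_cast h1
  have hjk : (j : ℝ) < k := by exact_mod_cast h2.trans_lt hn
  have hk0 : (0 : ℝ) < k := hj0.trans hjk
  have hpos : 0 < Real.sin (π * j / k) := by
    apply Real.sin_pos_of_pos_of_lt_pi
    · positivity
    · rw [div_lt_iff₀ hk0]
      exact mul_lt_mul_of_pos_left hjk Real.pi_pos
  positivity

theorem stmt18 (k : ℕ) (hodd : Odd k) (hk1 : 1 ≤ k)
    (m : ℕ) (hme : Even m) (hmk : m < k) :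
    (∏ j ∈ Finset.Icc 1 m, 2 * Real.sin (π * j * ((k : ℝ) - 1) / (2 * k)))⁻¹ =
      (∏ j ∈ Finset.Icc 1 m, 2 * Real.sin (π * j / (2 * k))) /
          (∏ j ∈ Finset.Icc 1 m, 2 * Real.sin (π * j / k)) *
        ((∏ j ∈ Finset.Icc 1 (m / 2), 2 * Real.sin (2 * π * j / k)) /
          (∏ j ∈ Finset.Icc 1 (m / 2), 2 * Real.sin (π * j / k)) ^ 2) := by
  obtain ⟨n, rfl⟩ := even_iff_exists_two_mul.mp hme
  rw [Nat.mul_div_cancel_left n two_pos]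
  have hk : (k : ℝ) ≠ 0 := by exact_mod_cast (Nat.pos_iff_ne_zero.mp hk1)
  have key := sine_product_identity k hk n
  have hD := sine_product_ne_zero k (2 * n) hmk
  have hE := sine_product_ne_zero k n (by omega)
  have hDE := mul_ne_zero hD (pow_ne_zero 2 hE)
  refine inv_eq_of_mul_eq_one_right ?_
  rw [div_mul_div_comm, mul_div_assoc', ← mul_assoc, key, div_self hDE]
end
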